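/- Let n ≥ 1, let f(x) ∈ 𝔽₂[x] divide xⁿ−1, and let p(x) ∈ 𝔽₂[x] satisfy gcd(p(x), xⁿ−1) = 1, so the image of p in R = 𝔽₂[x]/(xⁿ−1) is a unit with inverse p⁻¹. Let h(x) = (xⁿ−1)/f(x) and let d be the minimum weight of a nonzero element of the ideal of R generated by h (the cyclic code generated by h). Suppose r, s ∈ 𝔽₂[x] satisfy r + p·s ≡ h (mod xⁿ−1) and r', s' ∈ 𝔽₂[x] satisfy r' + p⁻¹·s' ≡ h (mod xⁿ−1). Set m = max{wt(p), wt(p⁻¹)}, and let m' denote either max{wt(r), wt(s)} or max{wt(r'), wt(s')} (the conclusion holds for both choices). Then, with a = f and b = p·f (images in R), every (u,v) ∈ C₁(a,b) \ C₂(a,b) satisfies wt(u) + wt(v) ≥ min{ (wt(p)+wt(p⁻¹))·d / (m + wt(p)·wt(p⁻¹)), d/m' } as rational numbers; in particular d_GB(a,b) is at least this minimum. -/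

import Mathlib

open Polynomial

noncomputable section

/-- `R2 n` is the ring `𝔽₂[x]/(xⁿ − 1)`. -/
abbrev R2 (n : ℕ) : Type := AdjoinRoot (X ^ n - 1 : (ZMod 2)[X])

/-- The image of `x` in `𝔽₂[x]/(xⁿ − 1)`. -/
def xR (n : ℕ) : R2 n := AdjoinRoot.root _

/-- The quotient map `𝔽₂[x] → 𝔽₂[x]/(xⁿ − 1)`. -/
def mkR (n : ℕ) : (ZMod 2)[X] →+* R2 n := AdjoinRoot.mk _

lemma xR_pow_n (n : ℕ) : xR n ^ n = 1 := by
  have h : (AdjoinRoot.mk (X ^ n - 1 : (ZMod 2)[X])) (X ^ n - 1) = 0 := AdjoinRoot.mk_self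
  rw [map_sub, map_pow, AdjoinRoot.mk_X, map_one, sub_eq_zero] at h
  exact h

/-- The unique representative of degree `< n` of an element of `𝔽₂[x]/(xⁿ − 1)` (junk if `n = 0`). -/
def repP {n : ℕ} (u : R2 n) : (ZMod 2)[X] :=
  if h : n = 0 then 0
  else AdjoinRoot.modByMonicHom (by simpa using monic_X_pow_sub_C (1 : ZMod 2) h) u

/-- The Hamming weight of an element of `𝔽₂[x]/(xⁿ − 1)`: the number of nonzero coefficients
of its degree-`< n` representative. -/
def wt {n : ℕ} (u : R2 n) : ℕ := (repP u).support.card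

/-- Coefficient of the degree-`< n` representative, indexed by `ℤ/n`. -/
def coeffZ {n : ℕ} (u : R2 n) (i : ZMod n) : ZMod 2 := (repP u).coeff i.val

/-- The X-stabilizer space `C₂(a,b) = {(r·a, r·b) : r ∈ R}` of the GB code of `(a,b)`. -/
def C2set (n : ℕ) (a b : R2 n) : Set (R2 n × R2 n) := {p | ∃ r : R2 n, p = (r * a, r * b)}

/-- The space `C₁(a,b) = {(u,v) : u·b + v·a = 0}` of the GB code of `(a,b)`. -/
def C1set (n : ℕ) (a b : R2 n) : Set (R2 n × R2 n) := {p | p.1 * b + p.2 * a = 0}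

/-- The (X-side) minimum distance of the GB code of `(a,b)`. -/
def dGB (n : ℕ) (a b : R2 n) : ℕ :=
  sInf {k | ∃ p ∈ C1set n a b \ C2set n a b, wt p.1 + wt p.2 = k}

/-- `P_m(x) = 1 + x + ⋯ + x^{m−1}` as a polynomial over `𝔽₂`. -/
def PmP (m : ℕ) : (ZMod 2)[X] := ∑ i ∈ Finset.range m, X ^ i

/-- `P_m(x) = 1 + x + ⋯ + x^{m−1}` as an element of `𝔽₂[x]/(xⁿ − 1)`. -/
def PmR (n m : ℕ) : R2 n := ∑ i ∈ Finset.range m, xR n ^ i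

/-- The ring endomorphism of `𝔽₂[x]/(xⁿ − 1)` induced by `x ↦ x^d`. -/
def substHom (n d : ℕ) : R2 n →+* R2 n :=
  AdjoinRoot.lift (algebraMap (ZMod 2) (R2 n)) (xR n ^ d) (by
    simp only [eval₂_sub, eval₂_X_pow, eval₂_one]
    rw [← pow_mul, mul_comm d n, pow_mul, xR_pow_n, one_pow, sub_self])

/-- The Euclidean inner product on `𝔽₂²ⁿ`, in terms of pairs `(u₁, u₂)` of elements of
`𝔽₂[x]/(xⁿ − 1)` (representing the concatenated binary vector `(u₁ | u₂)`). -/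
def eucInner (n : ℕ) (p q : R2 n × R2 n) : ZMod 2 :=
  ∑ i ∈ Finset.range n,
    ((repP p.1).coeff i * (repP q.1).coeff i + (repP p.2).coeff i * (repP q.2).coeff i)

/-- The symplectic inner product of `u₁ + w·u₂` and `v₁ + w·v₂`, i.e.
`Σᵢ (u₁ᵢ·v₂ᵢ + u₂ᵢ·v₁ᵢ)`, in terms of the pairs `(u₁,u₂)`, `(v₁,v₂)`. -/
def sympInner (n : ℕ) (p q : R2 n × R2 n) : ZMod 2 :=
  ∑ i ∈ Finset.range n,
    ((repP p.1).coeff i * (repP q.2).coeff i + (repP p.2).coeff i * (repP q.1).coeff i)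

/-- Euclidean dual of a set of (pairs representing) binary vectors of length `2n`. -/
def eucDual (n : ℕ) (S : Set (R2 n × R2 n)) : Set (R2 n × R2 n) :=
  {p | ∀ q ∈ S, eucInner n q p = 0}

/-- Symplectic dual of a set of (pairs representing) vectors of `𝔽₄ⁿ`. -/
def sympDual (n : ℕ) (S : Set (R2 n × R2 n)) : Set (R2 n × R2 n) :=
  {p | ∀ q ∈ S, sympInner n q p = 0}

/-- Number of nonzero `𝔽₄`-coordinates of `u₁ + w·u₂`, in terms of the pair `(u₁,u₂)`. -/
def wt4 (n : ℕ) (p : R2 n × R2 n) : ℕ := ((repP p.1).support ∪ (repP p.2).support).card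

/-- The `2n` binary coordinates of a pair `(u₁,u₂)`. -/
def coords {n : ℕ} (p : R2 n × R2 n) : (Fin n ⊕ Fin n) → ZMod 2 :=
  Sum.elim (fun i => (repP p.1).coeff i) (fun i => (repP p.2).coeff i)

/-- Vertex set of the Tanner graph: check vertices `x_t` (left) and data vertices
`q_s`, `q'_s` (right). -/
def TV (n : ℕ) : Type := (ZMod n) ⊕ ((ZMod n) ⊕ (ZMod n))

/-- `trel a b v w` holds iff `v` is a check vertex `x_t`, `w` is a data vertex, and they are
connected: `x_t ~ q_s` iff `a_{s−t} = 1`, and `x_t ~ q'_s` iff `b_{s−t} = 1`. -/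
def trel {n : ℕ} (a b : R2 n) (v w : TV n) : Prop :=
  ∃ t s : ZMod n, v = Sum.inl t ∧
    ((w = Sum.inr (Sum.inl s) ∧ coeffZ a (s - t) = 1) ∨
     (w = Sum.inr (Sum.inr s) ∧ coeffZ b (s - t) = 1))

/-- The Tanner graph `T(a,b)` of the GB code of `(a,b)`. -/
def tanner (n : ℕ) (a b : R2 n) : SimpleGraph (TV n) where
  Adj v w := trel a b v w ∨ trel a b w v
  symm := ⟨fun v w h => Or.symm h⟩
  loopless := by
    constructor
    rintro v (⟨t, s, hv, hw⟩ | ⟨t, s, hv, hw⟩) <;>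
      rcases hw with ⟨hw, -⟩ | ⟨hw, -⟩ <;> (subst hv; simp at hw)

end

noncomputable section

/-!
Modulo `xⁿ - 1` the annihilator of `f` is the cyclic code `(h)` and conversely. Hence `(u, v)`
lies in `C₁(f, pf)` iff its syndrome `up + v` lies in `(h)`, and in `C₂(f, pf)` iff `f ∣ u` and
`v = up`.

* If `up + v ≠ 0`, then `up + v` and `u + vp⁻¹` are nonzero words of `(h)`, so `d` is at most
  `wt u * wt p + wt v` and at most `wt u + wt v * wt p⁻¹`. Adding `wt p⁻¹` times the first bound
  to `wt p` times the second makes both coefficients, of `wt u` and of `wt v`, at most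
  `max (wt p) (wt p⁻¹) + wt p * wt p⁻¹`.
* If `up + v = 0`, then `v = up` and `uh` is a nonzero word of `(h)`, which the splitting
  `h = r + ps` turns into `uh = ur + vs`. Exchanging the roles of `u` and `v` replaces `p` by `p⁻¹`.
-/

lemma adjoinRoot_mul_mk_eq_zero_iff_dvd {R : Type*} [CommRing R] {f g h : R[X]}
    (hf : IsLeftRegular f) (hg : f * h = g) {c : AdjoinRoot g} :
    c * AdjoinRoot.mk g f = 0 ↔ AdjoinRoot.mk g h ∣ c := by
  subst hg
  constructor
  · obtain ⟨c, rfl⟩ := AdjoinRoot.mk_surjective c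
    rw [← map_mul, AdjoinRoot.mk_eq_zero, mul_comm c, hf.dvd_cancel_left]
    exact map_dvd _
  · rintro ⟨q, rfl⟩
    rw [mul_right_comm, ← map_mul, mul_comm h, AdjoinRoot.mk_self, zero_mul]

lemma min_div_div_le_natCast {K : Type*} [Semifield K] [LinearOrder K] [IsStrictOrderedRing K]
    {a b c d k : ℕ} (h : a ≤ k * b ∨ c ≤ k * d) : min ((a : K) / b) ((c : K) / d) ≤ k :=
  min_le_iff.2 <| h.imp
    (fun hab ↦ div_le_of_le_mul₀ (Nat.cast_nonneg _) (Nat.cast_nonneg _) (mod_cast hab))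
    (fun hcd ↦ div_le_of_le_mul₀ (Nat.cast_nonneg _) (Nat.cast_nonneg _) (mod_cast hcd))

section Weight

variable {n : ℕ}

lemma repP_zero : repP (0 : R2 n) = 0 := by
  unfold repP
  split_ifs <;> simp

lemma repP_add (u v : R2 n) : repP (u + v) = repP u + repP v := by
  unfold repP
  split_ifs <;> simp

lemma mkR_repP (hn : 0 < n) (u : R2 n) : mkR n (repP u) = u := by
  simp only [repP, hn.ne', dite_false]
  exact AdjoinRoot.mk_leftInverse _ u

lemma repP_mkR_of_degree_lt (hn : 0 < n) {q : (ZMod 2)[X]} (hq : q.degree < n) :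
    repP (mkR n q) = q := by
  have hmonic : (X ^ n - 1 : (ZMod 2)[X]).Monic := by
    simpa using monic_X_pow_sub_C (1 : ZMod 2) hn.ne'
  have hdegree : (X ^ n - 1 : (ZMod 2)[X]).degree = n := by
    simpa using degree_X_pow_sub_C hn (1 : ZMod 2)
  simp only [repP, hn.ne', dite_false, mkR, AdjoinRoot.modByMonicHom_mk]
  exact (modByMonic_eq_self_iff hmonic).2 (hdegree ▸ hq)

lemma wt_zero : wt (0 : R2 n) = 0 := by
  rw [wt, repP_zero, support_zero, Finset.card_empty]

lemma wt_add_le (u v : R2 n) : wt (u + v) ≤ wt u + wt v := by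
  rw [wt, repP_add]
  exact (Finset.card_le_card support_add).trans (Finset.card_union_le _ _)

lemma mkR_C_mul_X_pow_mod (i : ℕ) (c : ZMod 2) :
    mkR n (C c * X ^ (i % n)) = mkR n (C c * X ^ i) := by
  have hX : mkR n X ^ n = 1 := xR_pow_n n
  simp only [map_mul, map_pow, pow_eq_pow_mod i hX]

lemma wt_mkR_C_mul_X_pow_le_one (hn : 0 < n) (i : ℕ) (c : ZMod 2) :
    wt (mkR n (C c * X ^ i)) ≤ 1 := by
  have hdegree : (C c * X ^ (i % n) : (ZMod 2)[X]).degree < n :=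
    (degree_C_mul_X_pow_le _ _).trans_lt (WithBot.coe_lt_coe.2 (Nat.mod_lt i hn))
  rw [← mkR_C_mul_X_pow_mod, wt, repP_mkR_of_degree_lt hn hdegree]
  exact card_support_C_mul_X_pow_le_one

lemma wt_mkR_le_card_support (hn : 0 < n) (q : (ZMod 2)[X]) : wt (mkR n q) ≤ q.support.card := by
  calc
    wt (mkR n q) = wt (∑ i ∈ q.support, mkR n (C (q.coeff i) * X ^ i)) := by
        rw [← map_sum, ← as_sum_support_C_mul_X_pow]
    _ ≤ ∑ i ∈ q.support, wt (mkR n (C (q.coeff i) * X ^ i)) :=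
        Finset.le_sum_of_subadditive wt wt_zero.le wt_add_le _ _
    _ ≤ q.support.card := by
        simpa using Finset.sum_le_card_nsmul q.support _ 1
          fun i _ ↦ wt_mkR_C_mul_X_pow_le_one hn i (q.coeff i)

lemma wt_mul_le (hn : 0 < n) (u v : R2 n) : wt (u * v) ≤ wt u * wt v := by
  calc wt (u * v) = wt (mkR n (repP u * repP v)) := by
        rw [map_mul, mkR_repP hn, mkR_repP hn]
    _ ≤ (repP u * repP v).support.card := wt_mkR_le_card_support hn _
    _ ≤ wt u * wt v := card_support_mul_le

lemma wt_mul_add_le (hn : 0 < n) (u p v : R2 n) : wt (u * p + v) ≤ wt u * wt p + wt v :=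
  (wt_add_le _ _).trans (Nat.add_le_add_right (wt_mul_le hn u p) _)

lemma wt_mul_add_mul_le_max_mul (hn : 0 < n) (u v r s : R2 n) :
    wt (u * r + v * s) ≤ max (wt r) (wt s) * (wt u + wt v) := by
  calc wt (u * r + v * s) ≤ wt u * wt r + wt v * wt s :=
        (wt_add_le _ _).trans (add_le_add (wt_mul_le hn u r) (wt_mul_le hn v s))
    _ ≤ wt u * max (wt r) (wt s) + wt v * max (wt r) (wt s) := by
        gcongr
        exacts [le_max_left _ _, le_max_right _ _]
    _ = max (wt r) (wt s) * (wt u + wt v) := by ring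

end Weight

section CyclicCode

variable {n : ℕ} {p pinv h r s u v : R2 n}

/-- The minimum distance of a cyclic code of length `n`, that is, of an ideal of
`𝔽₂[x]/(xⁿ − 1)`; it is `0` for the zero code. -/
def cyclicMinDist (I : Ideal (R2 n)) : ℕ := sInf {k | ∃ c ∈ I, c ≠ 0 ∧ wt c = k}

lemma cyclicMinDist_bot : cyclicMinDist (⊥ : Ideal (R2 n)) = 0 := by
  simp [cyclicMinDist]

lemma cyclicMinDist_le_wt {I : Ideal (R2 n)} {c : R2 n} (hc : c ∈ I) (hc0 : c ≠ 0) :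
    cyclicMinDist I ≤ wt c :=
  Nat.sInf_le ⟨c, hc, hc0, rfl⟩

lemma wt_add_wt_mul_cyclicMinDist_le (hn : 0 < n) (hpinv : p * pinv = 1) {I : Ideal (R2 n)}
    (hmem : u * p + v ∈ I) (hne : u * p + v ≠ 0) :
    (wt p + wt pinv) * cyclicMinDist I ≤
      (wt u + wt v) * (max (wt p) (wt pinv) + wt p * wt pinv) := by
  have hswap : v * pinv + u = (u * p + v) * pinv := by linear_combination -u * hpinv
  have hne' : v * pinv + u ≠ 0 := by
    rwa [hswap, ne_eq, (IsUnit.of_mul_eq_one_right p hpinv).mul_left_eq_zero]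
  have hle : cyclicMinDist I ≤ wt u * wt p + wt v :=
    (cyclicMinDist_le_wt hmem hne).trans (wt_mul_add_le hn u p v)
  have hle' : cyclicMinDist I ≤ wt v * wt pinv + wt u :=
    (cyclicMinDist_le_wt (hswap ▸ I.mul_mem_right pinv hmem) hne').trans
      (wt_mul_add_le hn v pinv u)
  calc (wt p + wt pinv) * cyclicMinDist I
      = wt p * cyclicMinDist I + wt pinv * cyclicMinDist I := add_mul _ _ _
    _ ≤ wt p * (wt v * wt pinv + wt u) + wt pinv * (wt u * wt p + wt v) := by gcongr
    _ = wt u * (wt p + wt p * wt pinv) + wt v * (wt pinv + wt p * wt pinv) := by ring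
    _ ≤ wt u * (max (wt p) (wt pinv) + wt p * wt pinv) +
        wt v * (max (wt p) (wt pinv) + wt p * wt pinv) := by
        gcongr
        exacts [le_max_left _ _, le_max_right _ _]
    _ = (wt u + wt v) * (max (wt p) (wt pinv) + wt p * wt pinv) := (add_mul _ _ _).symm

lemma cyclicMinDist_le_max_wt_mul (hn : 0 < n) (hrs : r + p * s = h) (huh : u * h ≠ 0) :
    cyclicMinDist (Ideal.span {h}) ≤ max (wt r) (wt s) * (wt u + wt (u * p)) := by
  calc cyclicMinDist (Ideal.span {h})
      ≤ wt (u * h) := cyclicMinDist_le_wt (Ideal.mem_span_singleton'.2 ⟨u, rfl⟩) huh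
    _ = wt (u * r + u * p * s) := by rw [← hrs, mul_add, mul_assoc]
    _ ≤ max (wt r) (wt s) * (wt u + wt (u * p)) := wt_mul_add_mul_le_max_mul hn u (u * p) r s

lemma cyclicMinDist_le_max_wt_mul_of_inv (hn : 0 < n) (hpinv : p * pinv = 1)
    (hrs : r + pinv * s = h) (huh : u * h ≠ 0) :
    cyclicMinDist (Ideal.span {h}) ≤ max (wt r) (wt s) * (wt u + wt (u * p)) := by
  have hu : u * p * pinv = u := by rw [mul_assoc, hpinv, mul_one]
  have huph : u * p * h ≠ 0 := by
    rwa [mul_right_comm, ne_eq, (IsUnit.of_mul_eq_one pinv hpinv).mul_left_eq_zero]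
  simpa only [hu, add_comm (wt (u * p))] using cyclicMinDist_le_max_wt_mul hn hrs huph

end CyclicCode

section GeneralizedBicycle

variable {n : ℕ}

lemma mem_C1set_mul_iff {a p u v : R2 n} :
    (u, v) ∈ C1set n a (p * a) ↔ (u * p + v) * a = 0 := by
  rw [add_mul, mul_assoc]
  rfl

lemma mem_C2set_mul_iff {a p u v : R2 n} :
    (u, v) ∈ C2set n a (p * a) ↔ a ∣ u ∧ v = u * p := by
  constructor
  · rintro ⟨q, hq⟩
    obtain ⟨rfl, rfl⟩ := Prod.mk.inj hq
    exact ⟨dvd_mul_left a q, by ring⟩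
  · rintro ⟨⟨q, rfl⟩, rfl⟩
    exact ⟨q, by ext <;> ring⟩

lemma mem_C1set_sdiff_C2set_iff (hn : 0 < n) {f h : (ZMod 2)[X]} (hfh : f * h = X ^ n - 1)
    {p u v : R2 n} :
    (u, v) ∈ C1set n (mkR n f) (p * mkR n f) \ C2set n (mkR n f) (p * mkR n f) ↔
      mkR n h ∣ u * p + v ∧ (v = u * p → u * mkR n h ≠ 0) := by
  have hne : f * h ≠ 0 := by
    simpa [hfh] using X_pow_sub_C_ne_zero hn (1 : ZMod 2)
  have hann_f {c : R2 n} : c * mkR n f = 0 ↔ mkR n h ∣ c :=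
    adjoinRoot_mul_mk_eq_zero_iff_dvd (IsRegular.of_ne_zero (left_ne_zero_of_mul hne)).left hfh
  have hann_h {c : R2 n} : c * mkR n h = 0 ↔ mkR n f ∣ c :=
    adjoinRoot_mul_mk_eq_zero_iff_dvd (IsRegular.of_ne_zero (right_ne_zero_of_mul hne)).left
      ((mul_comm h f).trans hfh)
  rw [Set.mem_sdiff, mem_C1set_mul_iff, mem_C2set_mul_iff, hann_f, not_and', ne_eq, hann_h]

lemma C1set_sdiff_C2set_nonempty (hn : 0 < n) {f h : (ZMod 2)[X]} (hfh : f * h = X ^ n - 1)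
    (hh0 : mkR n h ≠ 0) (p : R2 n) :
    (C1set n (mkR n f) (p * mkR n f) \ C2set n (mkR n f) (p * mkR n f)).Nonempty :=
  ⟨(0, mkR n h), (mem_C1set_sdiff_C2set_iff hn hfh).2 (by simpa using hh0)⟩

lemma le_dGB {α : Type*} [LE α] [NatCast α] {a b : R2 n} {x : α}
    (hne : (C1set n a b \ C2set n a b).Nonempty)
    (hx : ∀ u v : R2 n, (u, v) ∈ C1set n a b \ C2set n a b → x ≤ ((wt u + wt v : ℕ) : α)) :
    x ≤ dGB n a b := by
  obtain ⟨c, hc⟩ := hne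
  obtain ⟨⟨u, v⟩, huv, hwt⟩ : dGB n a b ∈
      {k | ∃ q ∈ C1set n a b \ C2set n a b, wt q.1 + wt q.2 = k} := Nat.sInf_mem ⟨_, c, hc, rfl⟩
  exact hwt ▸ hx u v huv

end GeneralizedBicycle

/-- Lower bound on the minimum distance of the GB code of
`(f, p·f)`, where `f ∣ xⁿ−1`, `gcd(p, xⁿ−1) = 1` with `p⁻¹ = pinv` in `R`,
`h = (xⁿ−1)/f`, `d` is the minimum weight of a nonzero element of the cyclic code
generated by `h`, `r + p·s ≡ h` and `r' + p⁻¹·s' ≡ h (mod xⁿ−1)`,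
`m = max{wt(p), wt(p⁻¹)}`, and `m'` is either `max{wt(r), wt(s)}` or
`max{wt(r'), wt(s')}`:  every `(u,v) ∈ C₁ \ C₂` satisfies
`wt(u) + wt(v) ≥ min{(wt(p)+wt(p⁻¹))·d / (m + wt(p)·wt(p⁻¹)), d/m'}` as rationals;
in particular `d_GB(f, p·f)` is at least this minimum. -/
theorem stmt_4 (n : ℕ) (hn : 0 < n) (f p h : (ZMod 2)[X])
    (hf : f ∣ (X ^ n - 1 : (ZMod 2)[X]))
    (hp : EuclideanDomain.gcd p (X ^ n - 1 : (ZMod 2)[X]) = 1)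
    (pinv : R2 n) (hpinv : mkR n p * pinv = 1)
    (hh : f * h = X ^ n - 1)
    (d : ℕ) (hd : d = sInf {k | ∃ c ∈ Ideal.span {mkR n h}, c ≠ 0 ∧ wt c = k})
    (r s r' s' : (ZMod 2)[X])
    (hrs : mkR n r + mkR n p * mkR n s = mkR n h)
    (hrs' : mkR n r' + pinv * mkR n s' = mkR n h)
    (m m' : ℕ)
    (hm : m = max (wt (mkR n p)) (wt pinv))
    (hm' : m' = max (wt (mkR n r)) (wt (mkR n s)) ∨
           m' = max (wt (mkR n r')) (wt (mkR n s')))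
    (a b : R2 n) (ha : a = mkR n f) (hb : b = mkR n (p * f)) :
    (∀ u v : R2 n, (u, v) ∈ C1set n a b \ C2set n a b →
      min ((((wt (mkR n p) + wt pinv) * d : ℕ) : ℚ) / ((m + wt (mkR n p) * wt pinv : ℕ) : ℚ))
          ((d : ℚ) / (m' : ℚ)) ≤ ((wt u + wt v : ℕ) : ℚ)) ∧
    min ((((wt (mkR n p) + wt pinv) * d : ℕ) : ℚ) / ((m + wt (mkR n p) * wt pinv : ℕ) : ℚ))
        ((d : ℚ) / (m' : ℚ)) ≤ (dGB n a b : ℚ) := by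
  rw [map_mul] at hb
  obtain rfl : d = cyclicMinDist (Ideal.span {mkR n h}) := hd
  subst ha hb hm
  refine (and_iff_left_of_imp fun hbound ↦ ?_).2 fun u v huv ↦ min_div_div_le_natCast ?_
  · by_cases hh0 : mkR n h = 0
    · simp [hh0, cyclicMinDist_bot]
    · exact le_dGB (C1set_sdiff_C2set_nonempty hn hh hh0 (mkR n p)) hbound
  · obtain ⟨hdvd, huh⟩ := (mem_C1set_sdiff_C2set_iff hn hh).1 huv
    by_cases hsyndrome : u * mkR n p + v = 0
    · obtain rfl : v = u * mkR n p :=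
        (eq_neg_of_add_eq_zero_right hsyndrome).trans (ZModModule.neg_eq_self _)
      right
      rw [mul_comm]
      rcases hm' with rfl | rfl
      · exact cyclicMinDist_le_max_wt_mul hn hrs (huh rfl)
      · exact cyclicMinDist_le_max_wt_mul_of_inv hn hpinv hrs' (huh rfl)
    · left
      exact wt_add_wt_mul_cyclicMinDist_le hn hpinv (Ideal.mem_span_singleton.2 hdvd) hsyndrome

end
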